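/- Let b₁, b₂, b₃ ∈ ℂ and let Ω := {x ∈ ℝ³ : x₁ ≠ b₁ wherever needed, i.e. x_k − b_k ≠ 0 for k = 1,2,3} (interpreting x_k − b_k ∈ ℂ). Define α(x) = (x₁ − b₁)⁻¹e₁ + (x₂ − b₂)⁻¹e₂ + (x₃ − b₃)⁻¹e₃. Then on Ω: (i) Dα + α² = 0 (i.e. the potential v₀ = −Dα − α² vanishes identically); (ii) the potentials v_k = −Dα^{(k)} − α² are v₁ = 2((x₂−b₂)⁻² + (x₃−b₃)⁻²), v₂ = 2((x₁−b₁)⁻² + (x₃−b₃)⁻²), v₃ = 2((x₁−b₁)⁻² + (x₂−b₂)⁻²); and (iii) consequently for every harmonic scalar function g₀ : Ω → ℂ (Δg₀ = 0), the function f := Dg₀ − g₀α satisfies Df + fα = 0 on Ω. -/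

import Mathlib

noncomputable section

abbrev HC := Quaternion ℂ

def e1 : HC := ⟨0, 1, 0, 0⟩
def e2 : HC := ⟨0, 0, 1, 0⟩
def e3 : HC := ⟨0, 0, 0, 1⟩

def pd (k : Fin 3) (g : (Fin 3 → ℝ) → ℂ) (x : Fin 3 → ℝ) : ℂ :=
  fderiv ℝ g x (Pi.single k 1)

def lap (g : (Fin 3 → ℝ) → ℂ) (x : Fin 3 → ℝ) : ℂ :=
  pd 0 (pd 0 g) x + pd 1 (pd 1 g) x + pd 2 (pd 2 g) x

def pdq (k : Fin 3) (f : (Fin 3 → ℝ) → HC) (x : Fin 3 → ℝ) : HC :=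
  ⟨pd k (fun y => (f y).re) x, pd k (fun y => (f y).imI) x,
   pd k (fun y => (f y).imJ) x, pd k (fun y => (f y).imK) x⟩

def Dq (f : (Fin 3 → ℝ) → HC) (x : Fin 3 → ℝ) : HC :=
  e1 * pdq 0 f x + e2 * pdq 1 f x + e3 * pdq 2 f x

def lapq (f : (Fin 3 → ℝ) → HC) (x : Fin 3 → ℝ) : HC :=
  ⟨lap (fun y => (f y).re) x, lap (fun y => (f y).imI) x,
   lap (fun y => (f y).imJ) x, lap (fun y => (f y).imK) x⟩

def QDiffOn (f : (Fin 3 → ℝ) → HC) (Ω : Set (Fin 3 → ℝ)) : Prop :=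
  DifferentiableOn ℝ (fun y => (f y).re) Ω ∧ DifferentiableOn ℝ (fun y => (f y).imI) Ω ∧
  DifferentiableOn ℝ (fun y => (f y).imJ) Ω ∧ DifferentiableOn ℝ (fun y => (f y).imK) Ω

def QC2On (f : (Fin 3 → ℝ) → HC) (Ω : Set (Fin 3 → ℝ)) : Prop :=
  ContDiffOn ℝ 2 (fun y => (f y).re) Ω ∧ ContDiffOn ℝ 2 (fun y => (f y).imI) Ω ∧
  ContDiffOn ℝ 2 (fun y => (f y).imJ) Ω ∧ ContDiffOn ℝ 2 (fun y => (f y).imK) Ω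


/-- Build a biquaternion from its four complex components. -/
def quat (a b c d : ℂ) : HC := ⟨a, b, c, d⟩

/-- The basis `e₀ = 1, e₁, e₂, e₃`. -/
def ee : Fin 4 → HC := ![1, e1, e2, e3]

/-- The `k`-th complex component of a biquaternion. -/
def qc (k : Fin 4) (q : HC) : ℂ := ![q.re, q.imI, q.imJ, q.imK] k

/-- The involution `q^{(k)} = e_k q ē_k` (for `k = 0` this is the identity,
for `k = 1,2,3` it is `−e_k q e_k`). -/
def invol (k : Fin 4) (q : HC) : HC := if k = 0 then q else -(ee k * q * ee k)

theorem quat_re (a b c d : ℂ) : (quat a b c d).re = a := rfl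

theorem quat_imI (a b c d : ℂ) : (quat a b c d).imI = b := rfl

theorem quat_imJ (a b c d : ℂ) : (quat a b c d).imJ = c := rfl

theorem quat_imK (a b c d : ℂ) : (quat a b c d).imK = d := rfl

theorem e1_quat : e1 = quat 0 1 0 0 := rfl

theorem e2_quat : e2 = quat 0 0 1 0 := rfl

theorem e3_quat : e3 = quat 0 0 0 1 := rfl

theorem pdq_quat (k : Fin 3) (f : (Fin 3 → ℝ) → HC) (x : Fin 3 → ℝ) :
    pdq k f x = quat (pd k (fun y => (f y).re) x) (pd k (fun y => (f y).imI) x)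
      (pd k (fun y => (f y).imJ) x) (pd k (fun y => (f y).imK) x) := rfl

theorem zero_quat : (0 : HC) = quat 0 0 0 0 := rfl

theorem coe_quat (c : ℂ) : (c : HC) = quat c 0 0 0 := rfl

theorem pd_const (k : Fin 3) (c : ℂ) (x : Fin 3 → ℝ) : pd k (fun _ => c) x = 0 := by
  simp [pd]

theorem pd_neg (k : Fin 3) (u : (Fin 3 → ℝ) → ℂ) (x : Fin 3 → ℝ) :
    pd k (fun y => -u y) x = -pd k u x := by
  simp [pd, fderiv_fun_neg]

theorem hasF_inv (j : Fin 3) (b : ℂ) (x : Fin 3 → ℝ) (h : (x j : ℂ) - b ≠ 0) :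
    HasFDerivAt (fun y : Fin 3 → ℝ => ((y j : ℂ) - b)⁻¹)
      ((-(((x j : ℂ) - b)⁻¹) ^ 2) •
        (Complex.ofRealCLM.comp (ContinuousLinearMap.proj (R := ℝ) (φ := fun _ : Fin 3 => ℝ) j)))
      x := by
  have h1 : HasFDerivAt (fun y : Fin 3 → ℝ => (y j : ℂ) - b)
      (Complex.ofRealCLM.comp (ContinuousLinearMap.proj (R := ℝ) (φ := fun _ : Fin 3 => ℝ) j))
      x :=
    (Complex.ofRealCLM.comp (ContinuousLinearMap.proj (R := ℝ)
      (φ := fun _ : Fin 3 => ℝ) j)).hasFDerivAt.sub_const b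
  have h2 := (hasDerivAt_inv h).comp_hasFDerivAt x h1
  rw [inv_pow]
  exact h2

theorem pd_inv (k j : Fin 3) (b : ℂ) (x : Fin 3 → ℝ) (h : (x j : ℂ) - b ≠ 0) :
    pd k (fun y : Fin 3 → ℝ => ((y j : ℂ) - b)⁻¹) x =
      if j = k then -(((x j : ℂ) - b)⁻¹) ^ 2 else 0 := by
  rw [pd, (hasF_inv j b x h).fderiv]
  by_cases hjk : j = k
  · subst hjk; simp
  · simp [hjk]

theorem pd_sub_mul (k : Fin 3) (u v w : (Fin 3 → ℝ) → ℂ) (x : Fin 3 → ℝ)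
    (hu : DifferentiableAt ℝ u x) (hv : DifferentiableAt ℝ v x) (hw : DifferentiableAt ℝ w x) :
    pd k (fun y => u y - v y * w y) x = pd k u x - (pd k v x * w x + v x * pd k w x) := by
  have h : HasFDerivAt (fun y => u y - v y * w y) _ x :=
    (hu.hasFDerivAt).sub (hv.hasFDerivAt.mul hw.hasFDerivAt)
  rw [pd, h.fderiv]
  simp [pd]
  ring

theorem Dq_eq (f : (Fin 3 → ℝ) → HC) (a b c d : (Fin 3 → ℝ) → ℂ)
    (h : ∀ y, f y = quat (a y) (b y) (c y) (d y)) (x : Fin 3 → ℝ) :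
    Dq f x = quat (-pd 0 b x - pd 1 c x - pd 2 d x)
      (pd 0 a x + pd 1 d x - pd 2 c x)
      (pd 1 a x + pd 2 b x - pd 0 d x)
      (pd 2 a x + pd 0 c x - pd 1 b x) := by
  have hf : f = fun y => quat (a y) (b y) (c y) (d y) := funext h
  subst hf
  ext <;> simp [Dq, pdq_quat, e1_quat, e2_quat, e3_quat,
    quat_re, quat_imI, quat_imJ, quat_imK] <;> ring

theorem Dq_scalar (g : (Fin 3 → ℝ) → ℂ) (x : Fin 3 → ℝ) :
    Dq (fun z => ((g z : ℂ) : HC)) x = quat 0 (pd 0 g x) (pd 1 g x) (pd 2 g x) := by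
  rw [Dq_eq _ g (fun _ => 0) (fun _ => 0) (fun _ => 0) (fun y => by ext <;> simp [quat_re, quat_imI, quat_imJ, quat_imK])]
  simp [pd_const]

theorem pd_comm (j k : Fin 3) (g : (Fin 3 → ℝ) → ℂ) (x : Fin 3 → ℝ)
    (h : ContDiffAt ℝ 2 g x) : pd j (pd k g) x = pd k (pd j g) x := by
  have hs := h.isSymmSndFDerivAt (by simp)
  have hd : DifferentiableAt ℝ (fderiv ℝ g) x :=
    (h.fderiv_right (m := 1) (by norm_num)).differentiableAt (by norm_num)
  have key : ∀ j k : Fin 3, pd j (pd k g) x =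
      fderiv ℝ (fderiv ℝ g) x (Pi.single j 1) (Pi.single k 1) := by
    intro j k
    have : pd k g = fun y => fderiv ℝ g y (Pi.single k 1) := rfl
    rw [this, pd, fderiv_clm_apply hd (by fun_prop)]
    simp
  rw [key, key]
  exact hs _ _

theorem pd_diff (k : Fin 3) (g : (Fin 3 → ℝ) → ℂ) (x : Fin 3 → ℝ)
    (h : ContDiffAt ℝ 2 g x) : DifferentiableAt ℝ (pd k g) x := by
  have hd : DifferentiableAt ℝ (fderiv ℝ g) x :=
    (h.fderiv_right (m := 1) (by norm_num)).differentiableAt (by norm_num)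
  exact hd.clm_apply (by fun_prop)

/-- Example 1 of the paper: for `α = Σ (x_k − b_k)⁻¹ e_k` on the set
where all `x_k − b_k ≠ 0`: (i) `Dα + α² = 0`; (ii) the potentials
`v_k = −Dα^{(k)} − α²` are the explicit ones given in the paper; (iii) for any harmonic
`g₀`, the function `f = Dg₀ − g₀α` solves `Df + fα = 0`. -/
theorem example_inverse_linear_alpha (b1 b2 b3 : ℂ) :
    (let Ω : Set (Fin 3 → ℝ) :=
       {x | ((x 0 : ℂ) - b1 ≠ 0) ∧ ((x 1 : ℂ) - b2 ≠ 0) ∧ ((x 2 : ℂ) - b3 ≠ 0)}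
     let α : (Fin 3 → ℝ) → HC := fun x =>
       quat 0 (((x 0 : ℂ) - b1)⁻¹) (((x 1 : ℂ) - b2)⁻¹) (((x 2 : ℂ) - b3)⁻¹)
     -- (i): the Riccati equation holds with v₀ = 0
     (∀ x ∈ Ω, Dq α x + α x * α x = 0) ∧
     -- (ii): the potentials v₁, v₂, v₃
     (∀ x ∈ Ω, -Dq (fun y => invol 1 (α y)) x - α x * α x =
        ((2 * ((((x 1 : ℂ) - b2)⁻¹) ^ 2 + (((x 2 : ℂ) - b3)⁻¹) ^ 2) : ℂ) : HC)) ∧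
     (∀ x ∈ Ω, -Dq (fun y => invol 2 (α y)) x - α x * α x =
        ((2 * ((((x 0 : ℂ) - b1)⁻¹) ^ 2 + (((x 2 : ℂ) - b3)⁻¹) ^ 2) : ℂ) : HC)) ∧
     (∀ x ∈ Ω, -Dq (fun y => invol 3 (α y)) x - α x * α x =
        ((2 * ((((x 0 : ℂ) - b1)⁻¹) ^ 2 + (((x 1 : ℂ) - b2)⁻¹) ^ 2) : ℂ) : HC)) ∧
     -- (iii): harmonic functions generate solutions of Df + fα = 0
     (∀ g0 : (Fin 3 → ℝ) → ℂ, ContDiffOn ℝ 2 g0 Ω → (∀ x ∈ Ω, lap g0 x = 0) →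
        ∀ x ∈ Ω,
          Dq (fun y => Dq (fun z => ((g0 z : ℂ) : HC)) y - ((g0 y : ℂ) : HC) * α y) x +
            (Dq (fun z => ((g0 z : ℂ) : HC)) x - ((g0 x : ℂ) : HC) * α x) * α x = 0)) := by
  intro Ω α
  have hΩ : IsOpen Ω := by
    have hc : ∀ (j : Fin 3) (b : ℂ), IsOpen {x : Fin 3 → ℝ | (x j : ℂ) - b ≠ 0} := fun j b =>
      isOpen_ne_fun (by fun_prop) (by fun_prop)
    exact (hc 0 b1).inter ((hc 1 b2).inter (hc 2 b3))
  refine ⟨?_, ?_, ?_, ?_, ?_⟩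
  · rintro x ⟨h1, h2, h3⟩
    rw [Dq_eq α _ _ _ _ (fun y => rfl)]
    simp only [pd_const, pd_inv _ _ _ _ h1, pd_inv _ _ _ _ h2, pd_inv _ _ _ _ h3]
    rw [zero_quat]
    ext <;> simp [α, quat_re, quat_imI, quat_imJ, quat_imK, -inv_pow] <;> ring
  · rintro x ⟨h1, h2, h3⟩
    rw [Dq_eq _ (fun _ => 0) (fun y => ((y 0 : ℂ) - b1)⁻¹) (fun y => -((y 1 : ℂ) - b2)⁻¹)
      (fun y => -((y 2 : ℂ) - b3)⁻¹)
      (fun y => by ext <;> simp [invol, ee, e1_quat, e2_quat, e3_quat, α,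
        quat_re, quat_imI, quat_imJ, quat_imK])]
    simp only [pd_const, pd_neg, pd_inv _ _ _ _ h1, pd_inv _ _ _ _ h2, pd_inv _ _ _ _ h3]
    rw [coe_quat]
    ext <;> simp [α, quat_re, quat_imI, quat_imJ, quat_imK, -inv_pow] <;> ring
  · rintro x ⟨h1, h2, h3⟩
    rw [Dq_eq _ (fun _ => 0) (fun y => -((y 0 : ℂ) - b1)⁻¹) (fun y => ((y 1 : ℂ) - b2)⁻¹)
      (fun y => -((y 2 : ℂ) - b3)⁻¹)
      (fun y => by ext <;> simp [invol, ee, e1_quat, e2_quat, e3_quat, α,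
        quat_re, quat_imI, quat_imJ, quat_imK])]
    simp only [pd_const, pd_neg, pd_inv _ _ _ _ h1, pd_inv _ _ _ _ h2, pd_inv _ _ _ _ h3]
    rw [coe_quat]
    ext <;> simp [α, quat_re, quat_imI, quat_imJ, quat_imK, -inv_pow] <;> ring
  · rintro x ⟨h1, h2, h3⟩
    rw [Dq_eq _ (fun _ => 0) (fun y => -((y 0 : ℂ) - b1)⁻¹) (fun y => -((y 1 : ℂ) - b2)⁻¹)
      (fun y => ((y 2 : ℂ) - b3)⁻¹)
      (fun y => by ext <;> simp [invol, ee, e1_quat, e2_quat, e3_quat, α,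
        quat_re, quat_imI, quat_imJ, quat_imK])]
    simp only [pd_const, pd_neg, pd_inv _ _ _ _ h1, pd_inv _ _ _ _ h2, pd_inv _ _ _ _ h3]
    rw [coe_quat]
    ext <;> simp [α, quat_re, quat_imI, quat_imJ, quat_imK, -inv_pow] <;> ring
  · intro g hg hlap x hx
    have hC : ContDiffAt ℝ 2 g x := hg.contDiffAt (hΩ.mem_nhds hx)
    have hgd : DifferentiableAt ℝ g x := hC.differentiableAt (by norm_num)
    have hL := hlap x hx
    obtain ⟨h1, h2, h3⟩ := hx
    rw [Dq_eq _ (fun _ => 0) (fun y => pd 0 g y - g y * ((y 0 : ℂ) - b1)⁻¹)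
      (fun y => pd 1 g y - g y * ((y 1 : ℂ) - b2)⁻¹)
      (fun y => pd 2 g y - g y * ((y 2 : ℂ) - b3)⁻¹)
      (fun y => by rw [Dq_scalar]; ext <;> simp [α, quat_re, quat_imI, quat_imJ, quat_imK, -inv_pow]), Dq_scalar]
    have e1' := fun k => pd_sub_mul k (pd 0 g) g _ x (pd_diff 0 g x hC) hgd
      (hasF_inv 0 b1 x h1).differentiableAt
    have e2' := fun k => pd_sub_mul k (pd 1 g) g _ x (pd_diff 1 g x hC) hgd
      (hasF_inv 1 b2 x h2).differentiableAt
    have e3' := fun k => pd_sub_mul k (pd 2 g) g _ x (pd_diff 2 g x hC) hgd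
      (hasF_inv 2 b3 x h3).differentiableAt
    simp only [pd_const, e1', e2', e3', pd_inv _ _ _ _ h1, pd_inv _ _ _ _ h2,
      pd_inv _ _ _ _ h3]
    have c1 := pd_comm 0 1 g x hC
    have c2 := pd_comm 0 2 g x hC
    have c3 := pd_comm 1 2 g x hC
    rw [lap] at hL
    rw [c1, c2, c3]
    rw [zero_quat]
    ext
    · simp [α, quat_re, quat_imI, quat_imJ, quat_imK, -inv_pow]
      linear_combination -hL
    all_goals
      simp [α, quat_re, quat_imI, quat_imJ, quat_imK, -inv_pow]
      ring
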